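/- arXiv:2105.06098 — 2 statements merged into one kernel-verified Lean document; each statement's English description precedes it below -/
import Mathlib

section
/- Let q : ℝ×ℝ → ℂ be a smooth solution of the TOFKN equation. Then at every point (x,t), ∂_t(q·conj(q)) = ∂_x[ (5/2)(q·conj(q))³ + 3i·(q·conj(q))·(q_x·conj(q) − q·conj(q)_x) − (q_{xx}·conj(q) + q·conj(q)_{xx}) + q_x·conj(q)_x ]; that is, the mass density |q|² satisfies a local conservation law with the displayed flux. -/
noncomputable section

open Complex Matrix MeasureTheory ComplexConjugate Filter

abbrev Mat2 : Type := Matrix (Fin 2) (Fin 2) ℂ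

/-- Partial derivative in the first (space) variable of a function on `ℝ × ℝ`. -/
def px (f : ℝ × ℝ → ℂ) : ℝ × ℝ → ℂ := fun p => deriv (fun y => f (y, p.2)) p.1

/-- Partial derivative in the second (time) variable of a function on `ℝ × ℝ`. -/
def pt (f : ℝ × ℝ → ℂ) : ℝ × ℝ → ℂ := fun p => deriv (fun s => f (p.1, s)) p.2

/-- Entrywise partial derivative in `x` of a matrix-valued function. -/
def DxM (M : ℝ × ℝ → Mat2) : ℝ × ℝ → Mat2 :=
  fun p => Matrix.of fun i j => deriv (fun y => M (y, p.2) i j) p.1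

/-- Entrywise partial derivative in `t` of a matrix-valued function. -/
def DtM (M : ℝ × ℝ → Mat2) : ℝ × ℝ → Mat2 :=
  fun p => Matrix.of fun i j => deriv (fun s => M (p.1, s) i j) p.2

def sigma1 : Mat2 := !![0, 1; 1, 0]
def sigma2 : Mat2 := !![0, -Complex.I; Complex.I, 0]
def sigma3 : Mat2 := !![1, 0; 0, -1]

/-- The potential matrix `Q`. -/
def Qmat (q : ℝ × ℝ → ℂ) : ℝ × ℝ → Mat2 := fun p => !![0, q p; -conj (q p), 0]

/-- `|q|² = q ⬝ conj q`. -/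
def msq (q : ℝ × ℝ → ℂ) : ℝ × ℝ → ℂ := fun p => q p * conj (q p)

/-- The `x`-part Lax matrix `X(λ; x, t) = iλ²σ₃ + λQ`. -/
def Xmat (q : ℝ × ℝ → ℂ) (l : ℂ) : ℝ × ℝ → Mat2 :=
  fun p => (Complex.I * l ^ 2) • sigma3 + l • Qmat q p

/-- The `t`-part Lax matrix `T(λ; x, t)`. -/
def Tmat (q : ℝ × ℝ → ℂ) (l : ℂ) : ℝ × ℝ → Mat2 := fun p =>
  (4 * l ^ 4 + (3 / 2) * (msq q p) ^ 2 - 2 * l ^ 2 * msq q p) • Xmat q l p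
    + (-2 * Complex.I * l ^ 3 + 3 * Complex.I * l * msq q p) • (sigma3 * DxM (Qmat q) p)
    - (l ^ 2 * (px q p * conj (q p) - q p * px (fun p' => conj (q p')) p)) • sigma3
    - l • DxM (DxM (Qmat q)) p

/-- The third-order flow Kaup–Newell equation
`q_t + q_{xxx} − 3i(|q|²q_x)_x − (3/2)(|q|⁴q)_x = 0`. -/
def TOFKN (q : ℝ × ℝ → ℂ) : Prop :=
  ∀ p : ℝ × ℝ,
    pt q p + px (px (px q)) p
      - 3 * Complex.I * px (fun p' => msq q p' * px q p') p
      - (3 / 2) * px (fun p' => (msq q p') ^ 2 * q p') p = 0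

/-- The flux appearing in the local conservation law for the mass density `|q|²`. -/
def fluxF (q : ℝ × ℝ → ℂ) : ℝ × ℝ → ℂ := fun p =>
  (5 / 2) * (msq q p) ^ 3
    + 3 * Complex.I * msq q p * (px q p * conj (q p) - q p * px (fun p' => conj (q p')) p)
    - (px (px q) p * conj (q p) + q p * px (px (fun p' => conj (q p'))) p)
    + px q p * px (fun p' => conj (q p')) p

/-! Writing the equation as `q_t = N_x`, integration by parts in `(|q|²)_t = N_x q̄ + q N̄_x` leaves
the remainder `N q̄_x + q_x N̄`. In it the term `3i|q|²q_x` of `N` contributes a purely imaginary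
number plus its conjugate, so it drops out, and what is left is the exact derivative of
`½|q|⁶ - |q_x|²`. Hence the flux is `N q̄ + q N̄ + |q_x|² - ½|q|⁶`. -/

/-- The flux `N` for which the TOFKN equation takes the divergence form `q_t = N_x`. -/
def tofknFlux (q : ℝ × ℝ → ℂ) : ℝ × ℝ → ℂ := fun p =>
  -px (px q) p + 3 * Complex.I * (msq q p * px q p) + (3 / 2) * ((msq q p) ^ 2 * q p)

theorem px_conj (f : ℝ × ℝ → ℂ) : px (fun p => conj (f p)) = fun p => conj (px f p) :=
  funext fun _ => deriv.star

theorem fluxF_eq_tofknFlux (q : ℝ × ℝ → ℂ) (p : ℝ × ℝ) :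
    fluxF q p = tofknFlux q p * conj (q p) + q p * conj (tofknFlux q p)
      - ((1 / 2) * msq q p ^ 3 - px q p * conj (px q p)) := by
  simp only [fluxF, tofknFlux, msq, px_conj, map_add, map_neg, map_mul, map_pow, map_div₀,
    conj_conj, conj_I, map_ofNat]
  ring

theorem hasDerivAt_mul_conj {u : ℝ → ℂ} {u' : ℂ} {x : ℝ} (hu : HasDerivAt u u' x) :
    HasDerivAt (fun y => u y * conj (u y)) (u' * conj (u x) + u x * conj u') x :=
  hu.mul hu.star

section Slices

variable {q : ℝ × ℝ → ℂ} {x t : ℝ}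

theorem pt_msq (hq : DifferentiableAt ℝ (fun s => q (x, s)) t) :
    pt (msq q) (x, t) = pt q (x, t) * conj (q (x, t)) + q (x, t) * conj (pt q (x, t)) :=
  (hasDerivAt_mul_conj hq.hasDerivAt).deriv

theorem hasDerivAt_slice (hq : DifferentiableAt ℝ (fun y => q (y, t)) x) :
    HasDerivAt (fun y => q (y, t)) (px q (x, t)) x :=
  hq.hasDerivAt

theorem contDiff_px_slice {n : WithTop ℕ∞} (hq : ContDiff ℝ (n + 1) fun y => q (y, t)) :
    ContDiff ℝ n fun y => px q (y, t) :=
  hq.deriv'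

theorem contDiff_msq_slice {n : WithTop ℕ∞} (hq : ContDiff ℝ n fun y => q (y, t)) :
    ContDiff ℝ n fun y => msq q (y, t) :=
  hq.mul (conjCLE.contDiff.comp hq)

theorem hasDerivAt_tofknFlux (hq : ContDiff ℝ 3 fun y => q (y, t)) :
    HasDerivAt (fun y => tofknFlux q (y, t))
      (-px (px (px q)) (x, t) + 3 * Complex.I * px (fun p => msq q p * px q p) (x, t)
        + (3 / 2) * px (fun p => (msq q p) ^ 2 * q p) (x, t)) x := by
  have hqx : ContDiff ℝ 2 fun y => px q (y, t) := contDiff_px_slice hq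
  have hqxx : ContDiff ℝ 1 fun y => px (px q) (y, t) := contDiff_px_slice hqx
  have hm : ContDiff ℝ 3 fun y => msq q (y, t) := contDiff_msq_slice hq
  have dq := hq.differentiable (by norm_num)
  have dqx := hqx.differentiable (by norm_num)
  have dqxx := hqxx.differentiable (by norm_num)
  have dm := hm.differentiable (by norm_num)
  exact ((hasDerivAt_slice (dqxx x)).neg.add
    ((hasDerivAt_slice (q := fun p => msq q p * px q p) ((dm x).mul (dqx x))).const_mul _)).add
    ((hasDerivAt_slice (q := fun p => (msq q p) ^ 2 * q p) (((dm x).pow 2).mul (dq x))).const_mul _)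

theorem TOFKN.pt_eq_px_tofknFlux (h : TOFKN q) (hq : ContDiff ℝ 3 fun y => q (y, t)) :
    pt q (x, t) = px (tofknFlux q) (x, t) := by
  have hflux : px (tofknFlux q) (x, t) = _ := (hasDerivAt_tofknFlux hq).deriv
  rw [hflux]
  linear_combination h (x, t)

theorem hasDerivAt_half_msq_cube_sub_px_mul_conj (hq : ContDiff ℝ 2 fun y => q (y, t)) :
    HasDerivAt (fun y => (1 / 2) * msq q (y, t) ^ 3 - px q (y, t) * conj (px q (y, t)))
      (tofknFlux q (x, t) * conj (px q (x, t)) + px q (x, t) * conj (tofknFlux q (x, t))) x := by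
  have hqx : ContDiff ℝ 1 fun y => px q (y, t) := contDiff_px_slice hq
  have dq := hasDerivAt_slice (hq.differentiable (by norm_num) x)
  have dqx := hasDerivAt_slice (hqx.differentiable (by norm_num) x)
  have dm : HasDerivAt (fun y => msq q (y, t)) _ x := hasDerivAt_mul_conj dq
  refine (((dm.pow 3).const_mul (1 / 2)).sub (hasDerivAt_mul_conj dqx)).congr_deriv ?_
  simp only [tofknFlux, msq, map_add, map_neg, map_mul, map_pow, map_div₀, conj_conj, conj_I,
    map_ofNat]
  push_cast
  ring

theorem hasDerivAt_fluxF (hq : ContDiff ℝ 3 fun y => q (y, t)) :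
    HasDerivAt (fun y => fluxF q (y, t))
      (px (tofknFlux q) (x, t) * conj (q (x, t))
        + q (x, t) * conj (px (tofknFlux q) (x, t))) x := by
  have dq := hasDerivAt_slice (hq.differentiable (by norm_num) x)
  have dN := hasDerivAt_slice (hasDerivAt_tofknFlux (x := x) hq).differentiableAt
  have dremainder := hasDerivAt_half_msq_cube_sub_px_mul_conj (x := x) (hq.of_le (by norm_num))
  simp only [fluxF_eq_tofknFlux]
  refine (((dN.mul dq.star).add (dq.mul dN.star)).sub dremainder).congr_deriv ?_
  simp only [star_def]
  ring

end Slices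

theorem mass_density_conservation_general (q : ℝ × ℝ → ℂ)
    (hx : ∀ t, ContDiff ℝ 3 fun x => q (x, t)) (ht : ∀ x, Differentiable ℝ fun t => q (x, t))
    (hTOFKN : TOFKN q) (p : ℝ × ℝ) : pt (msq q) p = px (fluxF q) p := by
  obtain ⟨x, t⟩ := p
  calc pt (msq q) (x, t)
      = pt q (x, t) * conj (q (x, t)) + q (x, t) * conj (pt q (x, t)) := pt_msq (ht x t)
    _ = px (tofknFlux q) (x, t) * conj (q (x, t))
          + q (x, t) * conj (px (tofknFlux q) (x, t)) := by
      rw [hTOFKN.pt_eq_px_tofknFlux (hx t)]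
    _ = px (fluxF q) (x, t) := (hasDerivAt_fluxF (hx t)).deriv.symm

/-- for a smooth solution of the TOFKN equation, the mass density `|q|²`
satisfies the local conservation law `∂ₜ(|q|²) = ∂ₓ(flux)`. -/
theorem mass_density_conservation (q : ℝ × ℝ → ℂ) (hq : ContDiff ℝ (⊤ : ℕ∞) q)
    (hTOFKN : TOFKN q) :
    ∀ p : ℝ × ℝ, pt (msq q) p = px (fluxF q) p :=
  mass_density_conservation_general q
    (fun _ => contDiff_infty.mp (hq.comp (contDiff_id.prodMk contDiff_const)) 3)
    (fun _ => (hq.comp (contDiff_const.prodMk contDiff_id)).differentiable (by simp)) hTOFKN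
end
end

section
/- Fix q0 > 0 and q_± ∈ ℂ with |q_±| = q0, and let z ∈ ℂ∖{0}. Write λ = λ(z), k = k(z), and θ(z;x,t) = λk[x + (4λ⁴ + (3/2)q0⁴ − 2λ²q0²)t]. Then the matrix function Ψ^{bg}(x,t) = Y_±(z)·diag(e^{iθ(z;x,t)}, e^{−iθ(z;x,t)}) satisfies ∂_x Ψ^{bg} = X_±(λ)·Ψ^{bg} and ∂_t Ψ^{bg} = T_±(λ)·Ψ^{bg} at every (x,t) ∈ ℝ×ℝ. -/
noncomputable section

open Complex Matrix ComplexConjugate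

/-- The constant boundary potential matrix `Q±`. -/
def Qb (qb : ℂ) : Mat2 := !![0, qb; -conj qb, 0]

/-- The asymptotic Lax matrix `X± = iλ²σ₃ + λQ±`. -/
def Xb (qb : ℂ) (l : ℂ) : Mat2 := (Complex.I * l ^ 2) • sigma3 + l • Qb qb

/-- The asymptotic Lax matrix `T± = (4λ⁴ + (3/2)q₀⁴ − 2λ²q₀²)·X±`. -/
def Tb (q0 : ℝ) (qb : ℂ) (l : ℂ) : Mat2 :=
  (4 * l ^ 4 + (3 / 2) * (q0 : ℂ) ^ 4 - 2 * l ^ 2 * (q0 : ℂ) ^ 2) • Xb qb l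

/-- The uniformization map `λ(z) = (z − q₀²/z)/2`. -/
def lamz (q0 : ℝ) (z : ℂ) : ℂ := (z - (q0 : ℂ) ^ 2 / z) / 2

/-- The uniformization map `k(z) = (z + q₀²/z)/2`. -/
def kz (q0 : ℝ) (z : ℂ) : ℂ := (z + (q0 : ℂ) ^ 2 / z) / 2

/-- The eigenvector matrix `Y±(z) = I + (i/z)σ₃Q±`. -/
def Yz (qb : ℂ) (z : ℂ) : Mat2 := 1 + (Complex.I / z) • (sigma3 * Qb qb)

/-- The phase `θ(z; x, t) = λk[x + (4λ⁴ + (3/2)q₀⁴ − 2λ²q₀²)t]`. -/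
def thetaz (q0 : ℝ) (z : ℂ) (p : ℝ × ℝ) : ℂ :=
  lamz q0 z * kz q0 z *
    ((p.1 : ℂ)
      + (4 * (lamz q0 z) ^ 4 + (3 / 2) * (q0 : ℂ) ^ 4 - 2 * (lamz q0 z) ^ 2 * (q0 : ℂ) ^ 2)
        * (p.2 : ℂ))

/-- The background solution `Ψ^{bg}(x,t) = Y±(z)·diag(e^{iθ(z;x,t)}, e^{−iθ(z;x,t)})`. -/
def PsiBgZ (q0 : ℝ) (qb : ℂ) (z : ℂ) : ℝ × ℝ → Mat2 := fun p =>
  Yz qb z *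
    !![Complex.exp (Complex.I * thetaz q0 z p), 0;
       0, Complex.exp (-(Complex.I * thetaz q0 z p))]

/-!
With `φ(x, t) = x + (4λ⁴ + (3/2)q₀⁴ − 2λ²q₀²)t` and `D = iλkσ₃`, the background solution is
`Y exp(φ D)`. Since `σ₃² = 1`, `Qσ₃ = −σ₃Q` and `Q² = −q₀²`, the columns of `Y` are eigenvectors of
`X`, that is `XY = YD`. Hence a derivative of `Y exp(φ D)` in any direction is the derivative of `φ`
times `YD exp(φ D) = XY exp(φ D)`; the derivatives of `φ` in `x` and `t` are `1` and the scalar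
factor relating `T` to `X`.
-/

section BanachAlgebra

variable {𝕜 𝕂 𝔸 : Type*} [NontriviallyNormedField 𝕜] [RCLike 𝕂] [NormedAlgebra 𝕜 𝕂]
  [NormedRing 𝔸] [NormedAlgebra 𝕜 𝔸] [NormedAlgebra 𝕂 𝔸] [IsScalarTower 𝕜 𝕂 𝔸] [CompleteSpace 𝔸]

theorem hasDerivAt_mul_exp_smul_of_semiconjBy {X Y D : 𝔸} (h : SemiconjBy Y D X) {f : 𝕜 → 𝕂}
    {f' : 𝕂} {s : 𝕜} (hf : HasDerivAt f f' s) :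
    HasDerivAt (fun u => Y * NormedSpace.exp (f u • D))
      (f' • (X * (Y * NormedSpace.exp (f s • D)))) s := by
  have hexp : HasDerivAt (fun u => NormedSpace.exp (f u • D))
      (f' • (D * NormedSpace.exp (f s • D))) s :=
    (hasDerivAt_exp_smul_const' D (f s)).scomp s hf
  simpa only [mul_smul_comm, ← mul_assoc, h.eq] using hexp.const_mul Y

end BanachAlgebra

theorem semiconjBy_one_add_smul_mul {K A : Type*} [Field K] [Ring A] [Algebra K A] {σ Q : A}
    {i c l k z : K} (hi : i ^ 2 = -1) (hσ : σ * σ = 1) (hQσ : Q * σ = -(σ * Q))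
    (hQ : Q * Q = -c • 1) (hz : z ≠ 0) (hadd : l + k = z) (hsub : k - l = c / z) :
    SemiconjBy (1 + (i / z) • (σ * Q)) ((i * (l * k)) • σ) ((i * l ^ 2) • σ + l • Q) := by
  have hσσQ : σ * (σ * Q) = Q := by rw [← mul_assoc, hσ, one_mul]
  have hσQσ : σ * Q * σ = -Q := by rw [mul_assoc, hQσ, mul_neg, hσσQ]
  have hQσQ : Q * (σ * Q) = c • σ := by
    rw [← mul_assoc, hQσ, neg_mul, mul_assoc, hQ, mul_smul_comm, mul_one, neg_smul, neg_neg]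
  have hσcoeff : i * (l * k) = i * l ^ 2 + l * (i / z) * c := by
    linear_combination i * l * hsub
  have hQcoeff : -(i * (l * k) * (i / z)) = l + i * l ^ 2 * (i / z) := by
    field_simp
    linear_combination (-(l * k) - l ^ 2) * hi + l * hadd
  calc (1 + (i / z) • (σ * Q)) * ((i * (l * k)) • σ)
      = (i * (l * k)) • σ + -(i * (l * k) * (i / z)) • Q := by
        simp only [add_mul, one_mul, smul_mul_assoc, mul_smul_comm, hσQσ]
        module
    _ = (i * l ^ 2 + l * (i / z) * c) • σ + (l + i * l ^ 2 * (i / z)) • Q := by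
        rw [← hσcoeff, ← hQcoeff]
    _ = ((i * l ^ 2) • σ + l • Q) * (1 + (i / z) • (σ * Q)) := by
        simp only [add_mul, mul_add, mul_one, smul_mul_assoc, mul_smul_comm, hσσQ, hQσQ]
        module

theorem sigma3_mul_self : sigma3 * sigma3 = 1 := by
  simp [sigma3, Matrix.one_fin_two]

theorem Qb_mul_sigma3 (qb : ℂ) : Qb qb * sigma3 = -(sigma3 * Qb qb) := by
  simp [Qb, sigma3]

theorem Qb_mul_self (qb : ℂ) : Qb qb * Qb qb = -(‖qb‖ : ℂ) ^ 2 • (1 : Mat2) := by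
  simp [Qb, Matrix.one_fin_two, Complex.mul_conj', Complex.conj_mul']

theorem lamz_add_kz (q0 : ℝ) (z : ℂ) : lamz q0 z + kz q0 z = z := by
  simp only [lamz, kz]
  ring

theorem kz_sub_lamz (q0 : ℝ) (z : ℂ) : kz q0 z - lamz q0 z = (q0 : ℂ) ^ 2 / z := by
  simp only [lamz, kz]
  ring

theorem semiconjBy_Yz (qb : ℂ) {z : ℂ} (hz : z ≠ 0) :
    SemiconjBy (Yz qb z) ((Complex.I * (lamz ‖qb‖ z * kz ‖qb‖ z)) • sigma3)
      (Xb qb (lamz ‖qb‖ z)) :=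
  semiconjBy_one_add_smul_mul Complex.I_sq sigma3_mul_self (Qb_mul_sigma3 qb) (Qb_mul_self qb) hz
    (lamz_add_kz ‖qb‖ z) (kz_sub_lamz ‖qb‖ z)

theorem exp_smul_sigma3 (w : ℂ) :
    NormedSpace.exp (w • sigma3) = !![Complex.exp w, 0; 0, Complex.exp (-w)] := by
  have hdiag : w • sigma3 = Matrix.diagonal ![w, -w] := by
    simp [sigma3, Matrix.diagonal_vec2]
  rw [hdiag, Matrix.exp_diagonal, Matrix.diagonal_fin_two]
  simp [Pi.coe_exp, Complex.exp_eq_exp_ℂ]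

/-- The scalar factor `4λ⁴ + (3/2)q₀⁴ − 2λ²q₀²` that relates `T±` to `X±` and the time derivative of
the phase to its space derivative. -/
def timeFactor (q0 : ℝ) (l : ℂ) : ℂ :=
  4 * l ^ 4 + (3 / 2) * (q0 : ℂ) ^ 4 - 2 * l ^ 2 * (q0 : ℂ) ^ 2

/-- The variable `φ(x, t) = x + (4λ⁴ + (3/2)q₀⁴ − 2λ²q₀²)t`, for which `θ = λkφ`. -/
def phaseVar (q0 : ℝ) (l : ℂ) (p : ℝ × ℝ) : ℂ :=
  p.1 + timeFactor q0 l * p.2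

theorem hasDerivAt_phaseVar_fst (q0 : ℝ) (l : ℂ) (p : ℝ × ℝ) :
    HasDerivAt (fun x : ℝ => phaseVar q0 l (x, p.2)) 1 p.1 := by
  simpa [phaseVar] using (hasDerivAt_id' p.1).ofReal_comp.add_const (timeFactor q0 l * p.2)

theorem hasDerivAt_phaseVar_snd (q0 : ℝ) (l : ℂ) (p : ℝ × ℝ) :
    HasDerivAt (fun t : ℝ => phaseVar q0 l (p.1, t)) (timeFactor q0 l) p.2 := by
  simpa [phaseVar] using
    ((hasDerivAt_id' p.2).ofReal_comp.const_mul (timeFactor q0 l)).const_add (p.1 : ℂ)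

theorem PsiBgZ_eq_mul_exp (q0 : ℝ) (qb z : ℂ) (p : ℝ × ℝ) :
    PsiBgZ q0 qb z p = Yz qb z * NormedSpace.exp (phaseVar q0 (lamz q0 z) p •
      ((Complex.I * (lamz q0 z * kz q0 z)) • sigma3)) := by
  have hphase : phaseVar q0 (lamz q0 z) p * (Complex.I * (lamz q0 z * kz q0 z)) =
      Complex.I * thetaz q0 z p := by
    simp only [phaseVar, timeFactor, thetaz]
    ring
  rw [smul_smul, hphase, exp_smul_sigma3, PsiBgZ]

theorem hasDerivAt_matrix_apply {𝕜 E m n : Type*} [NontriviallyNormedField 𝕜]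
    [NormedAddCommGroup E] [NormedSpace 𝕜 E] [Finite n] {M : 𝕜 → Matrix m n E}
    {M' : Matrix m n E} {s : 𝕜} (h : HasDerivAt M M' s) (i : m) (j : n) :
    HasDerivAt (fun u => M u i j) (M' i j) s := by
  have := Fintype.ofFinite n
  exact hasDerivAt_pi.1 (hasDerivAt_pi.1 h i) j

theorem DxM_eq_of_hasDerivAt {M : ℝ × ℝ → Mat2} {M' : Mat2} {p : ℝ × ℝ}
    (h : HasDerivAt (fun x => M (x, p.2)) M' p.1) : DxM M p = M' :=
  Matrix.ext fun i j => (hasDerivAt_matrix_apply h i j).deriv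

theorem DtM_eq_of_hasDerivAt {M : ℝ × ℝ → Mat2} {M' : Mat2} {p : ℝ × ℝ}
    (h : HasDerivAt (fun t => M (p.1, t)) M' p.2) : DtM M p = M' :=
  Matrix.ext fun i j => (hasDerivAt_matrix_apply h i j).deriv

theorem hasDerivAt_PsiBgZ_comp (qb : ℂ) {z : ℂ} (hz : z ≠ 0) {γ : ℝ → ℝ × ℝ} {c : ℂ} {s : ℝ}
    (hγ : HasDerivAt (fun u => phaseVar ‖qb‖ (lamz ‖qb‖ z) (γ u)) c s) :
    HasDerivAt (fun u => PsiBgZ ‖qb‖ qb z (γ u))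
      (c • (Xb qb (lamz ‖qb‖ z) * PsiBgZ ‖qb‖ qb z (γ s))) s := by
  simp only [PsiBgZ_eq_mul_exp]
  open scoped Matrix.Norms.Operator in
  exact hasDerivAt_mul_exp_smul_of_semiconjBy (semiconjBy_Yz qb hz) hγ

theorem DxM_PsiBgZ (qb : ℂ) {z : ℂ} (hz : z ≠ 0) (p : ℝ × ℝ) :
    DxM (PsiBgZ ‖qb‖ qb z) p = Xb qb (lamz ‖qb‖ z) * PsiBgZ ‖qb‖ qb z p := by
  simpa only [one_smul] using
    DxM_eq_of_hasDerivAt (hasDerivAt_PsiBgZ_comp qb hz (hasDerivAt_phaseVar_fst _ _ p))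

theorem DtM_PsiBgZ (qb : ℂ) {z : ℂ} (hz : z ≠ 0) (p : ℝ × ℝ) :
    DtM (PsiBgZ ‖qb‖ qb z) p = Tb ‖qb‖ qb (lamz ‖qb‖ z) * PsiBgZ ‖qb‖ qb z p :=
  (DtM_eq_of_hasDerivAt (hasDerivAt_PsiBgZ_comp qb hz (hasDerivAt_phaseVar_snd _ _ p))).trans
    (smul_mul_assoc _ _ _).symm

/-- the background solution `Ψ^{bg} = Y±(z)e^{iθσ₃}` satisfies
`∂ₓΨ^{bg} = X±(λ(z))Ψ^{bg}` and `∂ₜΨ^{bg} = T±(λ(z))Ψ^{bg}`. -/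
theorem psiBgZ_solves (q0 : ℝ) (hq0 : 0 < q0) (qb : ℂ) (hqb : ‖qb‖ = q0)
    (z : ℂ) (hz : z ≠ 0) :
    ∀ p : ℝ × ℝ,
      DxM (PsiBgZ q0 qb z) p = Xb qb (lamz q0 z) * PsiBgZ q0 qb z p ∧
      DtM (PsiBgZ q0 qb z) p = Tb q0 qb (lamz q0 z) * PsiBgZ q0 qb z p := by
  subst hqb
  exact fun p => ⟨DxM_PsiBgZ qb hz p, DtM_PsiBgZ qb hz p⟩
end
end
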